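/- Let Π be a coupling Poisson tensor on E with geometric data (Π_V, Γ, F). A vertical vector field Y on E is an infinitesimal Poisson automorphism of Π (i.e. L_Y Π = 0) if and only if the following three conditions hold: (1) L_Y Π_V = 0; (2) L_Y(π*F) = 0; (3) [hor^Γ(u), Y] = 0 for every vector field u on B. -/

import Mathlib

/-!
The proof splits `L_Y Π` into components relative to the horizontal and vertical directions. Since
`Y` is vertical, so is each bracket `[hor_i, Y]`, and with `Π_H^{ij} = -G^{ij}`, `G = F⁻¹`,

* the base-base part of `L_Y Π` is `Y(Π_H^{ij})` (`lieBiv_inl_inl`);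
* the base-fiber part is `-Y(Π_H^{is}) Γ_s^β - Π_H^{is} [hor_s, Y]^β` (`lieBiv_inl_inr`), and the
  fiber-base part is its antisymmetric counterpart (`lieBiv_inr_inl`);
* the fiber-fiber part is `L_Y Π_V` plus terms linear in `Y(Π_H^{ij})` and `[hor_i, Y]`
  (`lieBiv_inr_inr`).

If the three conditions hold, all of these vanish. Conversely, the system is triangular: the
base-base part gives `Y(G) = 0`, the base-fiber part then gives `G^{is} [hor_s, Y]^β = 0`, hence
`[hor_s, Y] = 0` because `G` is invertible (`InvPair.eq_zero`), and the fiber-fiber part reduces to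
`L_Y Π_V = 0`. Finally `Y(G) = 0` is equivalent to `Y(F) = 0`, that is to `L_Y(π^*F) = 0`, by
differentiating `G F = 1` or `F G = 1` along `Y` (`InvPair.vertD_form`, `lieForm_pullF`).
-/

/-!
A coordinate model for coupling Poisson structures on a fibered space
`π : E → B`, following Yu. Vorobjev, "Poisson equivalence over a symplectic
leaf".  The total space is modelled in adapted local coordinates as
`E = ℝⁿ × ℝᵏ`, with base coordinates `ξ` and fiber coordinates `x`;
the zero section is the (candidate) symplectic leaf `B`.
-/

open scoped BigOperators

namespace PoissonCoupling

/-- Total space in adapted coordinates. -/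
abbrev Tot (n k : ℕ) := (Fin n → ℝ) × (Fin k → ℝ)

/-- Index type for all coordinates (base ⊕ fiber). -/
abbrev Idx (n k : ℕ) := Fin n ⊕ Fin k

variable {n k : ℕ}

/-- Coordinate basis vectors of the total space. -/
noncomputable def basisVec (n k : ℕ) : Idx n k → Tot n k
  | Sum.inl i => (Pi.single i 1, 0)
  | Sum.inr σ => (0, Pi.single σ 1)

/-- Partial derivative along the `a`-th coordinate direction. -/
noncomputable def pd (a : Idx n k) (f : Tot n k → ℝ) : Tot n k → ℝ :=
  fun p => fderiv ℝ f p (basisVec n k a)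

/-- `∂/∂ξ^i`. -/
noncomputable def pdB (i : Fin n) (f : Tot n k → ℝ) : Tot n k → ℝ :=
  pd (Sum.inl i) f

/-- `∂/∂x^σ`. -/
noncomputable def pdF (σ : Fin k) (f : Tot n k → ℝ) : Tot n k → ℝ :=
  pd (Sum.inr σ) f

/-- Components `Γ_i^ν(ξ,x)` of an Ehresmann connection on `E`. -/
abbrev Conn (n k : ℕ) := Fin n → Fin k → Tot n k → ℝ

/-- Horizontal components `Π_H^{ij}` of a bivector field. -/
abbrev BivH (n k : ℕ) := Fin n → Fin n → Tot n k → ℝ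
/-- Vertical components `Π_V^{αβ}` of a bivector field. -/
abbrev BivV (n k : ℕ) := Fin k → Fin k → Tot n k → ℝ
/-- Full coordinate components of a bivector field on `E`. -/
abbrev Biv (n k : ℕ) := Idx n k → Idx n k → Tot n k → ℝ
/-- Full coordinate components of a vector field on `E`. -/
abbrev Vec (n k : ℕ) := Idx n k → Tot n k → ℝ
/-- An element of `Ω¹(B) ⊗ C^∞(E)`. -/
abbrev Form1 (n k : ℕ) := Fin n → Tot n k → ℝ
/-- An element of `Ω²(B) ⊗ C^∞(E)`. -/
abbrev Form2 (n k : ℕ) := Fin n → Fin n → Tot n k → ℝ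
/-- A `2`-form on the base `B`. -/
abbrev BForm2 (n : ℕ) := Fin n → Fin n → (Fin n → ℝ) → ℝ

/-- Antisymmetry of components. -/
def Skew {ι : Type*} (P : ι → ι → Tot n k → ℝ) : Prop :=
  ∀ a b p, P a b p = -P b a p

/-- Smoothness. -/
def Sm (f : Tot n k → ℝ) : Prop := ContDiff ℝ (⊤ : ℕ∞) f

/-- Smoothness on a set. -/
def SmOn (f : Tot n k → ℝ) (N : Set (Tot n k)) : Prop := ContDiffOn ℝ (⊤ : ℕ∞) f N

/-- Smoothness, jointly in time and space. -/
def SmT (f : ℝ → Tot n k → ℝ) : Prop :=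
  ContDiff ℝ (⊤ : ℕ∞) (fun q : ℝ × Tot n k => f q.1 q.2)

/-- Derivative along the horizontal lift `hor_i = ∂_{ξ^i} - Γ_i^ν ∂_{x^ν}`. -/
noncomputable def horD (Γ : Conn n k) (i : Fin n) (f : Tot n k → ℝ) : Tot n k → ℝ :=
  fun p => pdB i f p - ∑ ν, Γ i ν p * pdF ν f p

/-- Curvature components:  `[hor_i, hor_j] = -Curv^σ_{ij} ∂_{x^σ}`. -/
noncomputable def curv (Γ : Conn n k) (i j : Fin n) (σ : Fin k) : Tot n k → ℝ :=
  fun p => horD Γ i (Γ j σ) p - horD Γ j (Γ i σ) p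

/-- Full coordinate components of the almost-coupling bivector field
`Π = ½ Π_H^{ij} hor_i ∧ hor_j + ½ Π_V^{αβ} ∂_{x^α} ∧ ∂_{x^β}`
relative to the connection `Γ`. -/
noncomputable def fullComp (Γ : Conn n k) (PH : BivH n k) (PV : BivV n k) : Biv n k
  | Sum.inl i, Sum.inl j => PH i j
  | Sum.inl i, Sum.inr β => fun p => -∑ s, PH i s p * Γ s β p
  | Sum.inr α, Sum.inl j => fun p => ∑ s, PH j s p * Γ s α p
  | Sum.inr α, Sum.inr β => fun p =>
      PV α β p + ∑ i, ∑ j, Γ i α p * PH i j p * Γ j β p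

/-- The Jacobi identity `[Π,Π] = 0` (vanishing of the Schouten bracket), in
coordinates, at all points of `N`. -/
def JacobiOn (P : Biv n k) (N : Set (Tot n k)) : Prop :=
  ∀ a b c, ∀ p ∈ N,
    (∑ s, (P a s p * pd s (P b c) p + P b s p * pd s (P c a) p
      + P c s p * pd s (P a b) p)) = 0

/-- Components of the Lie derivative `L_{hor_s} Π_V`. -/
noncomputable def lhorV (Γ : Conn n k) (PV : BivV n k) (s : Fin n) (α β : Fin k) :
    Tot n k → ℝ :=
  fun p => horD Γ s (PV α β) p
    + ∑ σ, (PV σ β p * pdF σ (Γ s α) p + PV α σ p * pdF σ (Γ s β) p)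

/-- Components of the vertical Hamiltonian vector field `Π_V♯ dH`. -/
noncomputable def sharpV (PV : BivV n k) (H : Tot n k → ℝ) (σ : Fin k) : Tot n k → ℝ :=
  fun p => ∑ μ, PV σ μ p * pdF μ H p

/-- Vertical Poisson bracket `{f, g}_Υ`. -/
noncomputable def pbr (PV : BivV n k) (f g : Tot n k → ℝ) : Tot n k → ℝ :=
  fun p => ∑ σ, ∑ μ, PV σ μ p * pdF σ f p * pdF μ g p

/-- `H` is a Casimir function of the vertical Poisson structure `PV` on `N`. -/
def IsCasimirOn (PV : BivV n k) (H : Tot n k → ℝ) (N : Set (Tot n k)) : Prop :=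
  ∀ σ, ∀ p ∈ N, sharpV PV H σ p = 0

/-- Relation (2.13): `𝔖_{(α,β,γ)} Π_V^{ασ} ∂Π_V^{βγ}/∂x^σ = 0`,
i.e. `[Π_V, Π_V] = 0`. -/
def Rel13 (PV : BivV n k) (N : Set (Tot n k)) : Prop :=
  ∀ α β γ, ∀ p ∈ N,
    (∑ σ, (PV α σ p * pdF σ (PV β γ) p + PV β σ p * pdF σ (PV γ α) p
      + PV γ σ p * pdF σ (PV α β) p)) = 0

/-- Relation (2.14): `Π_H^{is} L_{hor_s} Π_V = 0`. -/
def Rel14 (Γ : Conn n k) (PH : BivH n k) (PV : BivV n k) (N : Set (Tot n k)) : Prop :=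
  ∀ i α β, ∀ p ∈ N, (∑ s, PH i s p * lhorV Γ PV s α β p) = 0

/-- Relation (2.15): `𝔖_{(l,i,j)} Π_H^{ls} L_{hor_s}(Π_H^{ij}) = 0`. -/
def Rel15 (Γ : Conn n k) (PH : BivH n k) (N : Set (Tot n k)) : Prop :=
  ∀ l i j, ∀ p ∈ N,
    (∑ s, (PH l s p * horD Γ s (PH i j) p + PH i s p * horD Γ s (PH j l) p
      + PH j s p * horD Γ s (PH l i) p)) = 0

/-- Relation (2.16): `Π_H^{is} Curv^σ_{st} Π_H^{tj} = Π_V^{στ} ∂Π_H^{ij}/∂x^τ`. -/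
def Rel16 (Γ : Conn n k) (PH : BivH n k) (PV : BivV n k) (N : Set (Tot n k)) : Prop :=
  ∀ i j σ, ∀ p ∈ N,
    (∑ s, ∑ t, PH i s p * curv Γ s t σ p * PH t j p)
      = ∑ τ, PV σ τ p * pdF τ (PH i j) p

/-- `G` is the (pointwise) inverse of the coupling form `F` on `N`:
`G^{is} F_{sj} = δ^i_j`. -/
def InvPair (F G : Form2 n k) (N : Set (Tot n k)) : Prop :=
  ∀ i j, ∀ p ∈ N, (∑ s, G i s p * F s j p) = (if i = j then (1 : ℝ) else 0)

/-- Condition (2.24): `L_{hor^Γ(v)} Π_V = 0`. -/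
def Cond24 (Γ : Conn n k) (PV : BivV n k) (N : Set (Tot n k)) : Prop :=
  ∀ s α β, ∀ p ∈ N, lhorV Γ PV s α β p = 0

/-- Condition (2.25): `∂^Γ F = 0`. -/
def Cond25 (Γ : Conn n k) (F : Form2 n k) (N : Set (Tot n k)) : Prop :=
  ∀ i j s, ∀ p ∈ N,
    horD Γ i (F j s) p + horD Γ j (F s i) p + horD Γ s (F i j) p = 0

/-- Condition (2.26): `Curv^Γ(v,u) = Π_V♯ d(F(v,u))`. -/
def Cond26 (Γ : Conn n k) (PV : BivV n k) (F : Form2 n k) (N : Set (Tot n k)) : Prop :=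
  ∀ i j σ, ∀ p ∈ N, curv Γ i j σ p = sharpV PV (F i j) σ p

/-- The coupling bivector field associated with geometric data `(Π_V, Γ, F)`,
where `G = F⁻¹`:  `Π = -½ F^{ij} hor_i ∧ hor_j + ½ Π_V^{αβ} ∂_α ∧ ∂_β`. -/
noncomputable def couplingBiv (Γ : Conn n k) (G : Form2 n k) (PV : BivV n k) : Biv n k :=
  fullComp Γ (fun i j => fun p => -G i j p) PV

/-- Full components of the horizontal lift `hor_i`. -/
noncomputable def horFull (Γ : Conn n k) (i : Fin n) : Vec n k
  | Sum.inl j => fun _ => if i = j then 1 else 0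
  | Sum.inr ν => fun p => -Γ i ν p

/-- Full components of the horizontal vector field `X = X^i hor_i`. -/
noncomputable def horVec (Γ : Conn n k) (X : Fin n → Tot n k → ℝ) : Vec n k
  | Sum.inl j => X j
  | Sum.inr ν => fun p => -∑ i, X i p * Γ i ν p

/-- Full components of the vertical vector field `Y = Y^σ ∂_{x^σ}`. -/
noncomputable def vertVec (Y : Fin k → Tot n k → ℝ) : Vec n k
  | Sum.inl _ => fun _ => 0
  | Sum.inr σ => Y σ

/-- Full components of a vertical bivector field. -/
noncomputable def vertFull (PV : BivV n k) : Biv n k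
  | Sum.inr α, Sum.inr β => PV α β
  | Sum.inl _, _ => fun _ => 0
  | Sum.inr _, Sum.inl _ => fun _ => 0

/-- Lie derivative of a bivector field along a vector field, in coordinates. -/
noncomputable def lieBiv (X : Vec n k) (P : Biv n k) : Biv n k :=
  fun a b p => ∑ c, (X c p * pd c (P a b) p - P c b p * pd c (X a) p
    - P a c p * pd c (X b) p)

/-- Lie bracket of vector fields, in coordinates. -/
noncomputable def lieVec (X Y : Vec n k) : Vec n k :=
  fun a p => ∑ c, (X c p * pd c (Y a) p - Y c p * pd c (X a) p)

/-- Lie derivative of a `2`-form along a vector field, in coordinates. -/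
noncomputable def lieForm (X : Vec n k) (ω : Biv n k) : Biv n k :=
  fun a b p => ∑ c, (X c p * pd c (ω a b) p + ω c b p * pd a (X c) p
    + ω a c p * pd b (X c) p)

/-- Full components of the horizontal `2`-form `π^*F`. -/
noncomputable def pullF (F : Form2 n k) : Biv n k
  | Sum.inl i, Sum.inl j => F i j
  | Sum.inl _, Sum.inr _ => fun _ => 0
  | Sum.inr _, _ => fun _ => 0

/-- The interior product `(𝐢_X F)_j = X^s F_{sj}` for a horizontal field
`X = X^i hor_i`. -/
noncomputable def iXF (F : Form2 n k) (X : Fin n → Tot n k → ℝ) (j : Fin n) :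
    Tot n k → ℝ :=
  fun p => ∑ s, X s p * F s j p

/-- `(∂^Γ Q)_{ij}` for `Q ∈ Ω¹(B) ⊗ C^∞(E)`. -/
noncomputable def dGam1 (Γ : Conn n k) (Q : Form1 n k) (i j : Fin n) : Tot n k → ℝ :=
  fun p => horD Γ i (Q j) p - horD Γ j (Q i) p

/-- `(∂^Γ Θ)_{ijs}` for `Θ ∈ Ω²(B) ⊗ C^∞(E)` (cyclic sum). -/
noncomputable def dGam2 (Γ : Conn n k) (Θ : Form2 n k) (i j s : Fin n) : Tot n k → ℝ :=
  fun p => horD Γ i (Θ j s) p + horD Γ j (Θ s i) p + horD Γ s (Θ i j) p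

/-- Full components of `½ A^{ij} hor_i ∧ hor_j + M^{iσ} hor_i ∧ ∂_{x^σ}
 + ½ V^{αβ} ∂_{x^α} ∧ ∂_{x^β}`. -/
noncomputable def mixedFull (Γ : Conn n k) (A : BivH n k)
    (M : Fin n → Fin k → Tot n k → ℝ) (V : BivV n k) : Biv n k
  | Sum.inl i, Sum.inl j => A i j
  | Sum.inl i, Sum.inr β => fun p => M i β p - ∑ s, A i s p * Γ s β p
  | Sum.inr α, Sum.inl j => fun p => (∑ s, A j s p * Γ s α p) - M j α p
  | Sum.inr α, Sum.inr β => fun p =>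
      V α β p + (∑ i, ∑ j, Γ i α p * A i j p * Γ j β p)
        + ∑ s, (M s α p * Γ s β p - M s β p * Γ s α p)

/-- Relative Casimir `2`-cochain `C_{Π̃Π} = F̃ - F + (∂^Γ Q + ½{Q ∧ Q}_Υ)`. -/
noncomputable def casC (Υ : BivV n k) (Γ : Conn n k) (F Ftil : Form2 n k)
    (Q : Form1 n k) (i j : Fin n) : Tot n k → ℝ :=
  fun p => Ftil i j p - F i j p + (dGam1 Γ Q i j p + pbr Υ (Q i) (Q j) p)

/-- The zero section `B ⊂ E`. -/
def ZeroSec (n k : ℕ) : Set (Tot n k) := {p | p.2 = 0}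

/-- `N` is an open neighborhood of the zero section `B`. -/
def NbhdB (N : Set (Tot n k)) : Prop := IsOpen N ∧ ZeroSec n k ⊆ N

/-- Base partial derivative. -/
noncomputable def pdBase (i : Fin n) (f : (Fin n → ℝ) → ℝ) : (Fin n → ℝ) → ℝ :=
  fun ξ => fderiv ℝ f ξ (Pi.single i 1)

/-- `ω` is a symplectic form on the base `B`, with pointwise inverse `ωinv`. -/
def SymplecticB (ω ωinv : BForm2 n) : Prop :=
  (∀ i j ξ, ω i j ξ = -ω j i ξ) ∧
  (∀ i j, ContDiff ℝ (⊤ : ℕ∞) (ω i j)) ∧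
  (∀ i j s ξ, pdBase i (ω j s) ξ + pdBase j (ω s i) ξ + pdBase s (ω i j) ξ = 0) ∧
  (∀ i j ξ, (∑ s, ωinv i s ξ * ω s j ξ) = (if i = j then (1 : ℝ) else 0))

/-- `(B, ω)` (the zero section) is a symplectic leaf of the bivector field `P`. -/
def LeafB (P : Biv n k) (ω : BForm2 n) : Prop :=
  (∀ (α : Fin k) (b : Idx n k) (ξ : Fin n → ℝ), P (Sum.inr α) b (ξ, 0) = 0) ∧
  (∀ i j ξ, (∑ s, P (Sum.inl i) (Sum.inl s) (ξ, 0) * ω s j ξ)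
      = (if i = j then (-1 : ℝ) else 0))

/-- `Π` with geometric data `(Π_V, Γ, F)` (and `G = F⁻¹`) is a coupling Poisson
tensor on the neighborhood `N` of the zero section `B`, having `(B, ω)` as a
symplectic leaf. -/
def CouplingOn (Γ : Conn n k) (PV : BivV n k) (F G : Form2 n k) (ω : BForm2 n)
    (N : Set (Tot n k)) : Prop :=
  NbhdB N ∧ Skew PV ∧ Skew F ∧ InvPair F G N ∧
  Rel13 PV N ∧ Cond24 Γ PV N ∧ Cond25 Γ F N ∧ Cond26 Γ PV F N ∧
  (∀ α β ξ, PV α β (ξ, 0) = 0) ∧ (∀ i ν ξ, Γ i ν (ξ, 0) = 0) ∧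
  (∀ i j ξ, F i j (ξ, 0) = ω i j ξ) ∧
  (∀ i ν, SmOn (Γ i ν) N) ∧ (∀ α β, SmOn (PV α β) N) ∧ (∀ i j, SmOn (F i j) N)

/-- The `a`-th coordinate function. -/
def coord : Idx n k → Tot n k → ℝ
  | Sum.inl i => fun p => p.1 i
  | Sum.inr σ => fun p => p.2 σ

/-- Components of a map `φ : E → E` in coordinates. -/
def comp (φ : Tot n k → Tot n k) (a : Idx n k) : Tot n k → ℝ :=
  fun p => coord a (φ p)

/-- `P' = φ_* P` on `N` (push-forward of bivector fields, in coordinates). -/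
def PushBivOn (φ : Tot n k → Tot n k) (P P' : Biv n k) (N : Set (Tot n k)) : Prop :=
  ∀ a b, ∀ p ∈ N, P' a b (φ p) =
    ∑ c, ∑ d, pd c (comp φ a) p * pd d (comp φ b) p * P c d p

/-- `X' = φ_* X` on `N` (push-forward of vector fields, in coordinates). -/
def PushVecOn (φ : Tot n k → Tot n k) (X X' : Vec n k) (N : Set (Tot n k)) : Prop :=
  ∀ a, ∀ p ∈ N, X' a (φ p) = ∑ c, pd c (comp φ a) p * X c p

/-- The map from full vector-field components to the associated map `E → TE ≃ E`. -/
noncomputable def vecMap (X : Vec n k) : Tot n k → Tot n k :=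
  fun p => (fun i => X (Sum.inl i) p, fun σ => X (Sum.inr σ) p)

/-- `φ` is obtained (on `N`) as the time-one flow of the time-dependent vector
field `Z_t`. -/
def GeneratedBy (φ : Tot n k → Tot n k) (Z : ℝ → Tot n k → Tot n k)
    (N : Set (Tot n k)) : Prop :=
  ∃ Φ : ℝ → Tot n k → Tot n k,
    (∀ p, Φ 0 p = p) ∧ (∀ p ∈ N, Φ 1 p = φ p) ∧
    (∀ p ∈ N, ∀ t ∈ Set.Icc (0 : ℝ) 1, HasDerivAt (fun τ => Φ τ p) (Z t (Φ t p)) t)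

/-- `φ ∈ 𝔇iff⁰_B(E)`: `φ` is the time-one flow of a time-dependent vector field
vanishing on the zero section `B`. -/
def InDiff0 (φ : Tot n k → Tot n k) (N : Set (Tot n k)) : Prop :=
  ∃ Z : ℝ → Tot n k → Tot n k, (∀ t ξ, Z t (ξ, 0) = 0) ∧ GeneratedBy φ Z N

/-- `g ∈ 𝔈nd⁰_B(E)`: `g` is the time-one flow of a time-dependent *vertical*
vector field vanishing on the zero section `B`. -/
def InEnd0 (g : Tot n k → Tot n k) (N : Set (Tot n k)) : Prop :=
  ∃ Z : ℝ → Tot n k → Tot n k, (∀ t ξ, Z t (ξ, 0) = 0) ∧ (∀ t p, (Z t p).1 = 0) ∧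
    GeneratedBy g Z N

/-- Fiberwise linearization `Λ` of the vertical part `Π_V` at the zero section. -/
noncomputable def linV (PV : BivV n k) : BivV n k :=
  fun α β p => ∑ γ, pdF γ (PV α β) (p.1, 0) * p.2 γ

/-- Linearization `Γ^{(1)}` of the connection `Γ` at the zero section (a
homogeneous Ehresmann connection). -/
noncomputable def linConn (Γ : Conn n k) : Conn n k :=
  fun i σ p => ∑ ν, pdF ν (Γ i σ) (p.1, 0) * p.2 ν

/-- First-order (fiberwise-affine) truncation `F^{(1)}` of the coupling form. -/
noncomputable def linF (F : Form2 n k) : Form2 n k :=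
  fun i j p => F i j (p.1, 0) + ∑ σ, pdF σ (F i j) (p.1, 0) * p.2 σ

/-- The matrix of a `2`-form at a point. -/
noncomputable def matOf (F : Form2 n k) (p : Tot n k) : Matrix (Fin n) (Fin n) ℝ :=
  Matrix.of fun i j => F i j p

/-- Pointwise matrix inverse of a `2`-form. -/
noncomputable def invF (F : Form2 n k) : Form2 n k :=
  fun i j p => (matOf F p)⁻¹ i j

/-- The set where a `2`-form is nondegenerate. -/
def NondegSet (F : Form2 n k) : Set (Tot n k) := {p | IsUnit (matOf F p).det}

/-- Structure constants of the transverse Lie algebra of the leaf, read off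
from the linearization of `Π_V` at the zero section. -/
noncomputable def strC (PV : BivV n k) (ξ : Fin n → ℝ) (α β γ : Fin k) : ℝ :=
  pdF γ (PV α β) ((ξ, 0) : Tot n k)

/-- Killing form of the transverse Lie algebra. -/
noncomputable def killingF (PV : BivV n k) (ξ : Fin n → ℝ) (α β : Fin k) : ℝ :=
  ∑ σ, ∑ τ, strC PV ξ α τ σ * strC PV ξ β σ τ

/-- The transverse Lie algebra of the leaf is semisimple of compact type:
its Killing form is negative definite. -/
def CompactTypeTransverse (PV : BivV n k) : Prop :=
  ∀ ξ, ∀ v : Fin k → ℝ, v ≠ 0 →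
    (∑ α, ∑ β, v α * v β * killingF PV ξ α β) < 0

/-- Add a vertical field to a full vector field. -/
noncomputable def addVert (X : Vec n k) (V : Fin k → Tot n k → ℝ) : Vec n k
  | Sum.inl i => X (Sum.inl i)
  | Sum.inr σ => fun p => X (Sum.inr σ) p + V σ p

/-- Full components of the direct-product Poisson structure on `B × 𝔤^*`. -/
noncomputable def prodBiv (ωinv : BForm2 n) (c : Fin k → Fin k → Fin k → ℝ) : Biv n k
  | Sum.inl i, Sum.inl j => fun p => -ωinv i j p.1
  | Sum.inl _, Sum.inr _ => fun _ => 0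
  | Sum.inr _, Sum.inl _ => fun _ => 0
  | Sum.inr α, Sum.inr β => fun p => ∑ γ, c α β γ * p.2 γ

/-- Vector fields on the typical fiber. -/
abbrev FVec (k : ℕ) := Fin k → (Fin k → ℝ) → ℝ
/-- Bivector fields on the typical fiber. -/
abbrev FBiv (k : ℕ) := Fin k → Fin k → (Fin k → ℝ) → ℝ

/-- Partial derivative on the fiber. -/
noncomputable def pdV (μ : Fin k) (f : (Fin k → ℝ) → ℝ) : (Fin k → ℝ) → ℝ :=
  fun x => fderiv ℝ f x (Pi.single μ 1)

/-- Lichnerowicz operator `𝒟₀ f = [Υ, f] = Υ♯ df` on the fiber. -/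
noncomputable def D0 (U : FBiv k) (f : (Fin k → ℝ) → ℝ) : FVec k :=
  fun σ x => ∑ μ, U σ μ x * pdV μ f x

/-- Lichnerowicz operator `𝒟₁ w = [Υ, w] = L_w Υ` on the fiber. -/
noncomputable def D1 (U : FBiv k) (w : FVec k) : FBiv k :=
  fun α β x => ∑ c, (w c x * pdV c (U α β) x - U c β x * pdV c (w α) x
    - U α c x * pdV c (w β) x)

/-- Linear homotopy operators `ℋ₀, ℋ₁` for the Lichnerowicz complex of `U`
on `closure O`:  `𝒟₀ ∘ ℋ₀ + ℋ₁ ∘ 𝒟₁ = id`. -/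
def HomotopyOps (U : FBiv k) (O : Set (Fin k → ℝ))
    (H0 : FVec k → (Fin k → ℝ) → ℝ) (H1 : FBiv k → FVec k) : Prop :=
  (∀ X Y : FVec k, H0 (X + Y) = H0 X + H0 Y) ∧
  (∀ (c : ℝ) (X : FVec k), H0 (c • X) = c • H0 X) ∧
  (∀ W Z : FBiv k, H1 (W + Z) = H1 W + H1 Z) ∧
  (∀ (c : ℝ) (W : FBiv k), H1 (c • W) = c • H1 W) ∧
  (∀ X : FVec k, ∀ σ, ∀ x ∈ closure O, D0 U (H0 X) σ x + H1 (D1 U X) σ x = X σ x)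

end PoissonCoupling

namespace PoissonCoupling

/-! ### The derivation along a vertical field -/

/-- The derivative `Y(f) = Y^σ ∂f/∂x^σ` of a function along the vertical field `Y`. -/
noncomputable def vertD (Y : Fin k → Tot n k → ℝ) (f : Tot n k → ℝ) (p : Tot n k) : ℝ :=
  ∑ σ, Y σ p * pdF σ f p

/-- The fiber components `[hor_s, Y]^β = hor_s(Y^β) + Y(Γ_s^β)` of the bracket of the horizontal
lift `hor_s` with the vertical field `Y`. -/
noncomputable def horBr (Γ : Conn n k) (Y : Fin k → Tot n k → ℝ) (s : Fin n) (β : Fin k)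
    (p : Tot n k) : ℝ :=
  horD Γ s (Y β) p + vertD Y (Γ s β) p

lemma Sm.diff {f : Tot n k → ℝ} (hf : Sm f) : Differentiable ℝ f :=
  ContDiff.differentiable hf (by simp)

lemma pd_const (a : Idx n k) (c : ℝ) (p : Tot n k) : pd a (fun _ => c) p = 0 := by
  simp [pd]

/-- `Y(f)` as the Fréchet derivative of `f` in the direction `Y`, from which the Leibniz rules
follow. -/
lemma vertD_eq (Y : Fin k → Tot n k → ℝ) (f : Tot n k → ℝ) (p : Tot n k) :
    vertD Y f p = fderiv ℝ f p (∑ σ, Y σ p • basisVec n k (Sum.inr σ)) := by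
  simp [vertD, pdF, pd, map_sum]

lemma vertD_const (Y : Fin k → Tot n k → ℝ) (c : ℝ) (p : Tot n k) :
    vertD Y (fun _ => c) p = 0 := by
  simp [vertD_eq]

lemma vertD_neg (Y : Fin k → Tot n k → ℝ) (f : Tot n k → ℝ) (p : Tot n k) :
    vertD Y (fun q => -f q) p = -vertD Y f p := by
  simp [vertD_eq, fderiv_fun_neg]

lemma vertD_add (Y : Fin k → Tot n k → ℝ) {f g : Tot n k → ℝ} (hf : Differentiable ℝ f)
    (hg : Differentiable ℝ g) (p : Tot n k) :
    vertD Y (fun q => f q + g q) p = vertD Y f p + vertD Y g p := by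
  simp only [vertD_eq]
  rw [fderiv_fun_add (hf p) (hg p)]; rfl

lemma vertD_mul (Y : Fin k → Tot n k → ℝ) {f g : Tot n k → ℝ} (hf : Differentiable ℝ f)
    (hg : Differentiable ℝ g) (p : Tot n k) :
    vertD Y (fun q => f q * g q) p = vertD Y f p * g p + f p * vertD Y g p := by
  simp only [vertD_eq]
  rw [fderiv_fun_mul (hf p) (hg p)]
  simp only [add_apply, smul_apply, smul_eq_mul]
  ring

lemma vertD_sum (Y : Fin k → Tot n k → ℝ) {ι : Type*} [Fintype ι] {f : ι → Tot n k → ℝ}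
    (hf : ∀ i, Differentiable ℝ (f i)) (p : Tot n k) :
    vertD Y (fun q => ∑ i, f i q) p = ∑ i, vertD Y (f i) p := by
  simp only [vertD_eq]
  rw [fderiv_fun_sum (fun i _ => hf i p), sum_apply]

/-! ### The coordinate components of the Lie derivatives -/

/-- The components of `[hor_i, Y]`: the base components vanish and the fiber ones are `horBr`. -/
lemma lieVec_hor_inl (Γ : Conn n k) (Y : Fin k → Tot n k → ℝ) (i j : Fin n) (p : Tot n k) :
    lieVec (horFull Γ i) (vertVec Y) (Sum.inl j) p = 0 := by
  simp [lieVec, vertVec, horFull, pd_const]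

lemma lieVec_hor_inr (Γ : Conn n k) (Y : Fin k → Tot n k → ℝ) (i : Fin n) (β : Fin k)
    (p : Tot n k) :
    lieVec (horFull Γ i) (vertVec Y) (Sum.inr β) p = horBr Γ Y i β p := by
  have h : ∀ c : Idx n k, pd c (fun q => -Γ i β q) p = -pd c (Γ i β) p := by
    intro c
    simp [pd, fderiv_fun_neg]
  simp [lieVec, vertVec, horFull, h, horBr, horD, vertD, pdF, pdB, Finset.sum_add_distrib]
  ring

/-- Only the base components of `L_Y(π^*F)` survive, and they are the derivatives `Y(F_{ij})`. -/
lemma lieForm_pullF (Y : Fin k → Tot n k → ℝ) (F : Form2 n k) :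
    (∀ a b p, lieForm (vertVec Y) (pullF F) a b p = 0) ↔ ∀ i j p, vertD Y (F i j) p = 0 := by
  have key : ∀ i j p, lieForm (vertVec Y) (pullF F) (Sum.inl i) (Sum.inl j) p
      = vertD Y (F i j) p := by
    intro i j p
    simp [lieForm, vertVec, pullF, pd_const, vertD, pdF]
  constructor
  · intro h i j p
    rw [← key, h]
  · rintro h (i | α) (j | β) p
    · rw [key, h]
    all_goals simp [lieForm, vertVec, pullF, pd_const]

lemma lieBiv_vertFull_inr (Y : Fin k → Tot n k → ℝ) (PV : BivV n k) (α β : Fin k)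
    (p : Tot n k) :
    lieBiv (vertVec Y) (vertFull PV) (Sum.inr α) (Sum.inr β) p
      = vertD Y (PV α β) p - ∑ σ, PV σ β p * pdF σ (Y α) p
        - ∑ σ, PV α σ p * pdF σ (Y β) p := by
  simp [lieBiv, vertVec, vertFull, vertD, pdF]

/-- `L_Y Π_V` is again a vertical bivector field. -/
lemma lieBiv_vertFull_iff (Y : Fin k → Tot n k → ℝ) (PV : BivV n k) :
    (∀ a b p, lieBiv (vertVec Y) (vertFull PV) a b p = 0) ↔
      ∀ α β p, lieBiv (vertVec Y) (vertFull PV) (Sum.inr α) (Sum.inr β) p = 0 := by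
  constructor
  · intro h α β p
    exact h _ _ p
  · rintro h (i | α) (j | β) p
    · simp [lieBiv, vertVec, vertFull, pd_const]
    · simp [lieBiv, vertVec, vertFull, pd_const]
    · simp [lieBiv, vertVec, vertFull, pd_const]
    · exact h α β p

section Components

variable (Γ : Conn n k) (PV : BivV n k) (H : BivH n k) (Y : Fin k → Tot n k → ℝ)

lemma lieBiv_inl_inl (i j : Fin n) (p : Tot n k) :
    lieBiv (vertVec Y) (fullComp Γ H PV) (Sum.inl i) (Sum.inl j) p = vertD Y (H i j) p := by
  simp [lieBiv, vertVec, fullComp, pd_const, vertD, pdF]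

lemma lieBiv_inl_inr (hΓ : ∀ i ν, Differentiable ℝ (Γ i ν))
    (hH : ∀ i j, Differentiable ℝ (H i j)) (i : Fin n) (β : Fin k) (p : Tot n k) :
    lieBiv (vertVec Y) (fullComp Γ H PV) (Sum.inl i) (Sum.inr β) p
      = -∑ s, (vertD Y (H i s) p * Γ s β p + H i s p * horBr Γ Y s β p) := by
  have h1 : lieBiv (vertVec Y) (fullComp Γ H PV) (Sum.inl i) (Sum.inr β) p
      = vertD Y (fun q => -∑ s, H i s q * Γ s β q) p
        - (∑ s, H i s p * pdB s (Y β) p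
          + ∑ ν, (-∑ s, H i s p * Γ s ν p) * pdF ν (Y β) p) := by
    simp [lieBiv, vertVec, fullComp, pd_const, vertD, pdF, pdB]
  have h2 : ∑ ν, (-∑ s, H i s p * Γ s ν p) * pdF ν (Y β) p
      = -∑ s, H i s p * ∑ ν, Γ s ν p * pdF ν (Y β) p := by
    simp only [neg_mul, Finset.sum_neg_distrib, Finset.sum_mul, Finset.mul_sum]
    rw [Finset.sum_comm]
    simp only [mul_assoc]
  rw [h1, h2, vertD_neg, vertD_sum Y (fun s => (hH i s).fun_mul (hΓ s β))]
  simp only [vertD_mul Y (hH _ _) (hΓ _ _), horBr, horD, mul_add, mul_sub,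
    Finset.sum_add_distrib, Finset.sum_sub_distrib]
  ring

lemma lieBiv_inr_inl (hH' : Skew H) (hΓ : ∀ i ν, Differentiable ℝ (Γ i ν))
    (hH : ∀ i j, Differentiable ℝ (H i j)) (j : Fin n) (α : Fin k) (p : Tot n k) :
    lieBiv (vertVec Y) (fullComp Γ H PV) (Sum.inr α) (Sum.inl j) p
      = ∑ s, (vertD Y (H j s) p * Γ s α p + H j s p * horBr Γ Y s α p) := by
  have h1 : lieBiv (vertVec Y) (fullComp Γ H PV) (Sum.inr α) (Sum.inl j) p
      = vertD Y (fun q => ∑ s, H j s q * Γ s α q) p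
        - (∑ s, H s j p * pdB s (Y α) p
          + ∑ ν, (∑ s, H j s p * Γ s ν p) * pdF ν (Y α) p) := by
    simp [lieBiv, vertVec, fullComp, pd_const, vertD, pdF, pdB]
  have h2 : ∑ ν, (∑ s, H j s p * Γ s ν p) * pdF ν (Y α) p
      = ∑ s, H j s p * ∑ ν, Γ s ν p * pdF ν (Y α) p := by
    simp only [Finset.sum_mul, Finset.mul_sum]
    rw [Finset.sum_comm]
    simp only [mul_assoc]
  have h3 : ∑ s, H s j p * pdB s (Y α) p = -∑ s, H j s p * pdB s (Y α) p := by
    rw [← Finset.sum_neg_distrib]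
    exact Finset.sum_congr rfl fun s _ => by rw [hH' s j p]; ring
  rw [h1, h2, h3, vertD_sum Y (fun s => (hH j s).fun_mul (hΓ s α))]
  simp only [vertD_mul Y (hH _ _) (hΓ _ _), horBr, horD, mul_add, mul_sub,
    Finset.sum_add_distrib, Finset.sum_sub_distrib]
  ring

/-- The fiber components of `L_Y Π` are those of `L_Y Π_V`, up to terms containing `Y(Π_H^{ij})`
or `[hor_i, Y]`. -/
lemma lieBiv_inr_inr (hH' : Skew H) (hΓ : ∀ i ν, Differentiable ℝ (Γ i ν))
    (hH : ∀ i j, Differentiable ℝ (H i j)) (hV : ∀ α β, Differentiable ℝ (PV α β))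
    (α β : Fin k) (p : Tot n k) :
    lieBiv (vertVec Y) (fullComp Γ H PV) (Sum.inr α) (Sum.inr β) p
      = lieBiv (vertVec Y) (vertFull PV) (Sum.inr α) (Sum.inr β) p
        + ∑ i, ∑ j, (Γ i α p * vertD Y (H i j) p * Γ j β p
          + horBr Γ Y i α p * H i j p * Γ j β p
          + Γ i α p * H i j p * horBr Γ Y j β p) := by
  have h1 : lieBiv (vertVec Y) (fullComp Γ H PV) (Sum.inr α) (Sum.inr β) p
      = vertD Y (fun q => PV α β q + ∑ i, ∑ j, Γ i α q * H i j q * Γ j β q) p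
        - (∑ i, (-∑ s, H i s p * Γ s β p) * pdB i (Y α) p
          + ∑ σ, (PV σ β p + ∑ i, ∑ j, Γ i σ p * H i j p * Γ j β p) * pdF σ (Y α) p)
        - (∑ j, (∑ s, H j s p * Γ s α p) * pdB j (Y β) p
          + ∑ σ, (PV α σ p + ∑ i, ∑ j, Γ i α p * H i j p * Γ j σ p) * pdF σ (Y β) p) := by
    simp [lieBiv, vertVec, fullComp, vertD, pdF, pdB]
  have h2 : ∑ σ, (∑ i, ∑ j, Γ i σ p * H i j p * Γ j β p) * pdF σ (Y α) p
      = ∑ i, ∑ j, H i j p * Γ j β p * ∑ σ, Γ i σ p * pdF σ (Y α) p := by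
    simp only [Finset.sum_mul, Finset.mul_sum]
    rw [Finset.sum_comm]
    refine Finset.sum_congr rfl fun i _ => ?_
    rw [Finset.sum_comm]
    exact Finset.sum_congr rfl fun j _ => Finset.sum_congr rfl fun σ _ => by ring
  have h3 : ∑ σ, (∑ i, ∑ j, Γ i α p * H i j p * Γ j σ p) * pdF σ (Y β) p
      = ∑ i, ∑ j, Γ i α p * H i j p * ∑ σ, Γ j σ p * pdF σ (Y β) p := by
    simp only [Finset.sum_mul, Finset.mul_sum]
    rw [Finset.sum_comm]
    refine Finset.sum_congr rfl fun i _ => ?_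
    rw [Finset.sum_comm]
    exact Finset.sum_congr rfl fun j _ => Finset.sum_congr rfl fun σ _ => by ring
  have h4 : ∑ j, (∑ s, H j s p * Γ s α p) * pdB j (Y β) p
      = -∑ i, ∑ j, Γ i α p * H i j p * pdB j (Y β) p := by
    simp only [Finset.sum_mul, ← Finset.sum_neg_distrib]
    rw [Finset.sum_comm]
    exact Finset.sum_congr rfl fun i _ => Finset.sum_congr rfl fun j _ => by
      rw [hH' j i p]; ring
  have h5 : vertD Y (fun q => PV α β q + ∑ i, ∑ j, Γ i α q * H i j q * Γ j β q) p
      = vertD Y (PV α β) p + ∑ i, ∑ j, (Γ i α p * vertD Y (H i j) p * Γ j β p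
          + vertD Y (Γ i α) p * H i j p * Γ j β p
          + Γ i α p * H i j p * vertD Y (Γ j β) p) := by
    have d1 : ∀ i j, Differentiable ℝ (fun q => Γ i α q * H i j q) := fun i j =>
      (hΓ i α).mul (hH i j)
    have d2 : ∀ i j, Differentiable ℝ (fun q => Γ i α q * H i j q * Γ j β q) := fun i j =>
      (d1 i j).mul (hΓ j β)
    have d3 : ∀ i, Differentiable ℝ (fun q => ∑ j, Γ i α q * H i j q * Γ j β q) := fun i =>
      Differentiable.fun_sum fun j _ => d2 i j
    rw [vertD_add Y (hV α β) (Differentiable.fun_sum fun i _ => d3 i), vertD_sum Y d3]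
    congr 1
    refine Finset.sum_congr rfl fun i _ => ?_
    rw [vertD_sum Y (d2 i)]
    refine Finset.sum_congr rfl fun j _ => ?_
    rw [vertD_mul Y (d1 i j) (hΓ j β), vertD_mul Y (hΓ i α) (hH i j)]
    ring
  rw [h1, h5, lieBiv_vertFull_inr]
  simp only [add_mul, Finset.sum_add_distrib]
  rw [h2, h3, h4]
  have h6 : ∑ i, (-∑ s, H i s p * Γ s β p) * pdB i (Y α) p
      = -∑ i, ∑ j, H i j p * Γ j β p * pdB i (Y α) p := by
    simp only [neg_mul, Finset.sum_neg_distrib, Finset.sum_mul]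
  have h7 : ∑ i, ∑ j, horBr Γ Y i α p * H i j p * Γ j β p
      = ∑ i, ∑ j, H i j p * Γ j β p * pdB i (Y α) p
        - ∑ i, ∑ j, H i j p * Γ j β p * ∑ σ, Γ i σ p * pdF σ (Y α) p
        + ∑ i, ∑ j, vertD Y (Γ i α) p * H i j p * Γ j β p := by
    simp only [← Finset.sum_add_distrib, ← Finset.sum_sub_distrib]
    exact Finset.sum_congr rfl fun i _ => Finset.sum_congr rfl fun j _ => by
      rw [horBr, horD]; ring
  have h8 : ∑ i, ∑ j, Γ i α p * H i j p * horBr Γ Y j β p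
      = ∑ i, ∑ j, Γ i α p * H i j p * pdB j (Y β) p
        - ∑ i, ∑ j, Γ i α p * H i j p * ∑ σ, Γ j σ p * pdF σ (Y β) p
        + ∑ i, ∑ j, Γ i α p * H i j p * vertD Y (Γ j β) p := by
    simp only [← Finset.sum_add_distrib, ← Finset.sum_sub_distrib]
    exact Finset.sum_congr rfl fun i _ => Finset.sum_congr rfl fun j _ => by
      rw [horBr, horD]; ring
  rw [h6, h7, h8]
  ring

end Components

/-! ### The coupling form and its inverse -/

lemma InvPair.matOf_mul {F G : Form2 n k} (h : InvPair F G Set.univ) (p : Tot n k) :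
    matOf G p * matOf F p = 1 := by
  ext i j
  simpa [matOf, Matrix.mul_apply, Matrix.one_apply] using h i j p trivial

lemma InvPair.swap {F G : Form2 n k} (h : InvPair F G Set.univ) : InvPair G F Set.univ := by
  intro i j p _
  have h1 : matOf F p * matOf G p = 1 := mul_eq_one_comm.mp (h.matOf_mul p)
  have := congrFun (congrFun h1 i) j
  simpa [matOf, Matrix.mul_apply, Matrix.one_apply] using this

/-- The inverse of an antisymmetric matrix is antisymmetric. -/
lemma InvPair.skew {F G : Form2 n k} (h : InvPair F G Set.univ) (hF : Skew F) : Skew G := by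
  intro i j p
  have hFt : (matOf F p).transpose = -matOf F p := by
    ext a b
    simpa [matOf] using hF b a p
  have h1 : matOf F p * -(matOf G p).transpose = 1 := by
    have := congrArg Matrix.transpose (h.matOf_mul p)
    rw [Matrix.transpose_mul, hFt, Matrix.transpose_one] at this
    rw [← this]; simp
  have h2 := left_inv_eq_right_inv (h.matOf_mul p) h1
  simpa [matOf] using congrFun (congrFun h2 i) j

/-- A contraction with the invertible matrix `G` vanishes only for the zero vector. -/
lemma InvPair.eq_zero {F G : Form2 n k} (h : InvPair F G Set.univ) (p : Tot n k)
    (v : Fin n → ℝ) (hv : ∀ i, ∑ s, G i s p * v s = 0) : v = 0 := by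
  have h1 : (matOf G p).mulVec v = 0 := funext fun i => by
    simpa [matOf, Matrix.mulVec, dotProduct] using hv i
  have h2 : (matOf F p * matOf G p).mulVec v = 0 := by
    rw [← Matrix.mulVec_mulVec, h1, Matrix.mulVec_zero]
  rwa [mul_eq_one_comm.mp (h.matOf_mul p), Matrix.one_mulVec] at h2

/-- If `Y` annihilates `G`, it annihilates its inverse `F`: differentiate `G F = 1` along `Y`. -/
lemma InvPair.vertD_form {F G : Form2 n k} (h : InvPair F G Set.univ)
    (hF : ∀ i j, Differentiable ℝ (F i j)) (hG : ∀ i j, Differentiable ℝ (G i j))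
    (Y : Fin k → Tot n k → ℝ) (hY : ∀ i j p, vertD Y (G i j) p = 0) (i j : Fin n)
    (p : Tot n k) : vertD Y (F i j) p = 0 := by
  have key : ∀ l, ∑ s, G l s p * vertD Y (F s j) p = 0 := by
    intro l
    have h1 : (fun q => ∑ s, G l s q * F s j q) = fun _ => (if l = j then (1 : ℝ) else 0) :=
      funext fun q => h l j q trivial
    have h2 := congrArg (fun f => vertD Y f p) h1
    simp only [vertD_const] at h2
    rw [vertD_sum Y (fun s => (hG l s).fun_mul (hF s j))] at h2
    simpa [vertD_mul Y (hG _ _) (hF _ _), hY] using h2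
  exact congrFun (h.eq_zero p _ key) i

/-- Proposition 2.13 of Vorobjev.  A vertical vector field
`Y` is an infinitesimal Poisson automorphism of a coupling Poisson tensor `Π`
with geometric data `(Π_V, Γ, F)` if and only if `L_Y Π_V = 0`,
`L_Y(π^*F) = 0` and `[hor^Γ(u), Y] = 0` for every vector field `u` on `B`. -/
theorem vertical_poisson_automorphism_iff {n k : ℕ} (Γ : Conn n k) (PV : BivV n k)
    (F G : Form2 n k) (hPV : Skew PV) (hF : Skew F)
    (hinv : InvPair F G Set.univ)
    (h23 : Rel13 PV Set.univ) (h24 : Cond24 Γ PV Set.univ)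
    (h25 : Cond25 Γ F Set.univ) (h26 : Cond26 Γ PV F Set.univ)
    (hsmΓ : ∀ i ν, Sm (Γ i ν)) (hsmV : ∀ α β, Sm (PV α β))
    (hsmF : ∀ i j, Sm (F i j)) (hsmG : ∀ i j, Sm (G i j))
    (Y : Fin k → Tot n k → ℝ) (hsmY : ∀ σ, Sm (Y σ)) :
    (∀ a b p, lieBiv (vertVec Y) (couplingBiv Γ G PV) a b p = 0) ↔
      ((∀ a b p, lieBiv (vertVec Y) (vertFull PV) a b p = 0) ∧
       (∀ a b p, lieForm (vertVec Y) (pullF F) a b p = 0) ∧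
       (∀ i a p, lieVec (horFull Γ i) (vertVec Y) a p = 0)) := by
  have dΓ := fun i ν => (hsmΓ i ν).diff
  have dV := fun α β => (hsmV α β).diff
  have dF := fun i j => (hsmF i j).diff
  have dG := fun i j => (hsmG i j).diff
  have dH : ∀ i j, Differentiable ℝ (fun q => -G i j q) := fun i j => (dG i j).neg
  have hG := hinv.skew hF
  have hH : Skew (fun i j q => -G i j q) := fun i j p => congrArg Neg.neg (hG i j p)
  rw [lieForm_pullF, lieBiv_vertFull_iff]
  constructor
  · intro h
    have hYG : ∀ i j p, vertD Y (G i j) p = 0 := fun i j p => by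
      have := h (Sum.inl i) (Sum.inl j) p
      rw [couplingBiv, lieBiv_inl_inl, vertD_neg] at this
      exact neg_eq_zero.mp this
    have hB : ∀ s β p, horBr Γ Y s β p = 0 := fun s β p => by
      refine congrFun (hinv.eq_zero p (fun s => horBr Γ Y s β p) fun i => ?_) s
      have := h (Sum.inl i) (Sum.inr β) p
      rw [couplingBiv, lieBiv_inl_inr Γ PV _ Y dΓ dH] at this
      simpa [vertD_neg, hYG] using this
    refine ⟨fun α β p => ?_, hinv.vertD_form dF dG Y hYG, ?_⟩
    · have := h (Sum.inr α) (Sum.inr β) p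
      rw [couplingBiv, lieBiv_inr_inr Γ PV _ Y hH dΓ dH dV] at this
      simpa [vertD_neg, hYG, hB] using this
    · rintro i (j | β) p
      · exact lieVec_hor_inl Γ Y i j p
      · rw [lieVec_hor_inr, hB]
  · rintro ⟨hV, hYF, hY⟩
    have hYG := hinv.swap.vertD_form dG dF Y hYF
    have hB : ∀ s β p, horBr Γ Y s β p = 0 := fun s β p => by
      rw [← lieVec_hor_inr, hY]
    rintro (i | α) (j | β) p
    · rw [couplingBiv, lieBiv_inl_inl, vertD_neg, hYG, neg_zero]
    · rw [couplingBiv, lieBiv_inl_inr Γ PV _ Y dΓ dH]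
      simp [vertD_neg, hYG, hB]
    · rw [couplingBiv, lieBiv_inr_inl Γ PV _ Y hH dΓ dH]
      simp [vertD_neg, hYG, hB]
    · rw [couplingBiv, lieBiv_inr_inr Γ PV _ Y hH dΓ dH dV, hV]
      simp [vertD_neg, hYG, hB]

end PoissonCoupling
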